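/- Capacity of universal LDCs (Theorem 1): for all integers N ≥ 2 and K ≥ 1, the supremum over all code lengths M ∈ ℕ and over all universal locally decodable codes (ULDCs) with locality N and K source symbols of the symbol rate R_s = L_w/L_x equals C*(N,K) = N·(1 + 1/N + 1/N² + ⋯ + 1/N^{K−1})^{−1}, and this supremum is attained by some ULDC. -/

import Mathlib

open scoped BigOperators

noncomputable section

/-- A finite probability space: a finite type together with a probability mass function. -/
structure FinProbSpace where
  Ω : Type
  [fin : Fintype Ω]
  p : Ω → ℝ
  nonneg : ∀ ω, 0 ≤ p ω
  sum_one : ∑ ω, p ω = 1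

attribute [instance] FinProbSpace.fin

namespace FinProbSpace

variable (P : FinProbSpace)

/-- Probability that the random variable `X` takes the value `a`. -/
def prob {α : Type} [DecidableEq α] (X : P.Ω → α) (a : α) : ℝ :=
  ∑ ω, if X ω = a then P.p ω else 0

/-- Shannon entropy (in bits) of a finitely valued random variable. -/
def H {α : Type} [Fintype α] [DecidableEq α] (X : P.Ω → α) : ℝ :=
  ∑ a, -(P.prob X a * Real.logb 2 (P.prob X a))

/-- Conditional Shannon entropy `H(X | Y) = H(X, Y) - H(Y)` (in bits). -/
def condH {α β : Type} [Fintype α] [DecidableEq α] [Fintype β] [DecidableEq β]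
    (X : P.Ω → α) (Y : P.Ω → β) : ℝ :=
  P.H (fun ω => (X ω, Y ω)) - P.H Y

/-- The tuple random variable `(X_i)_{i ∈ ι}`. -/
def tuple {ι V : Type} (X : ι → P.Ω → V) : P.Ω → ι → V := fun ω i => X i ω

/-- Joint (mutual) independence of a finite family of random variables. -/
def iIndep {ι V : Type} [Fintype ι] [DecidableEq ι] [DecidableEq V] (X : ι → P.Ω → V) : Prop :=
  ∀ a : ι → V, P.prob (P.tuple X) a = ∏ i, P.prob (X i) (a i)

/-- `X` and `Y` contain the same information about everything beyond `Z`: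
`H(X | Y, Z) = H(Y | X, Z) = 0`. -/
def sameInfo {α β γ : Type} [Fintype α] [DecidableEq α] [Fintype β] [DecidableEq β]
    [Fintype γ] [DecidableEq γ] (X : P.Ω → α) (Y : P.Ω → β) (Z : P.Ω → γ) : Prop :=
  P.condH X (fun ω => (Y ω, Z ω)) = 0 ∧ P.condH Y (fun ω => (X ω, Z ω)) = 0

end FinProbSpace

/-- A locally decodable code with `K` source symbols of entropy `Lw`, `M` coded symbols of
entropy `Lx`, and locality `N`. -/
structure LDC (K N M : ℕ) (Lw Lx : ℝ) where
  P : FinProbSpace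
  V : Type
  [fV : Fintype V]
  [dV : DecidableEq V]
  V' : Type
  [fV' : Fintype V']
  [dV' : DecidableEq V']
  /-- the source symbols -/
  W : Fin K → P.Ω → V
  /-- the coded symbols -/
  X : Fin M → P.Ω → V'
  indep : P.iIndep W
  HW : ∀ k, P.H (W k) = Lw
  coded_fn : ∀ m, ∃ f : (Fin K → V) → V', ∀ ω, X m ω = f (fun k => W k ω)
  HX : ∀ m, P.H (X m) = Lx
  /-- the decoding supersets -/
  decSets : Fin K → Finset (Finset (Fin M))
  decSets_nonempty : ∀ k, (decSets k).Nonempty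
  decSets_card : ∀ k, ∀ s ∈ decSets k, s.card = N
  decodes : ∀ k, ∀ s ∈ decSets k,
    P.condH (W k) (P.tuple fun i : {x // x ∈ s} => X i.1) = 0

attribute [instance] LDC.fV LDC.dV LDC.fV' LDC.dV'

/-- A universal LDC: every coded symbol appears in some decoding set of every source symbol. -/
def LDC.IsUniversal {K N M : ℕ} {Lw Lx : ℝ} (C : LDC K N M Lw Lx) : Prop :=
  ∀ (m : Fin M) (k : Fin K), ∃ s ∈ C.decSets k, m ∈ s

/-- A perfectly smooth LDC: for each source symbol, every coded symbol lies in the same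
number of decoding sets. -/
def LDC.IsSmooth {K N M : ℕ} {Lw Lx : ℝ} (C : LDC K N M Lw Lx) : Prop :=
  ∀ (k : Fin K) (m m' : Fin M),
    ((C.decSets k).filter (fun s => m ∈ s)).card =
      ((C.decSets k).filter (fun s => m' ∈ s)).card

/-- `C*(N, K) = N (1 + 1/N + ⋯ + 1/N^{K-1})⁻¹`. -/
def Cstar (N K : ℕ) : ℝ := N / (∑ j ∈ Finset.range K, (1 / (N : ℝ)) ^ j)

/-- An `N`-query information retrieval scheme with `K` messages of entropy `Lw` and
answer sets of sizes `Mn n` with answers of entropy `Lx`. -/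
structure IRScheme (K N : ℕ) (Mn : Fin N → ℕ) (Lw Lx : ℝ) where
  P : FinProbSpace
  V : Type
  [fV : Fintype V]
  [dV : DecidableEq V]
  V' : Type
  [fV' : Fintype V']
  [dV' : DecidableEq V']
  /-- the messages -/
  W : Fin K → P.Ω → V
  /-- `A n m` is the `m`-th possible answer of database `n` -/
  A : (n : Fin N) → Fin (Mn n) → P.Ω → V'
  indep : P.iIndep W
  HW : ∀ k, P.H (W k) = Lw
  ans_fn : ∀ n m, ∃ f : (Fin K → V) → V', ∀ ω, A n m ω = f (fun k => W k ω)
  HA : ∀ n m, P.H (A n m) = Lx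
  /-- the decoding supersets: each decoding set consists of one answer index per database -/
  Q : Fin K → Finset ((n : Fin N) → Fin (Mn n))
  Q_nonempty : ∀ k, (Q k).Nonempty
  decodes : ∀ k, ∀ q ∈ Q k, P.condH (W k) (P.tuple fun n => A n (q n)) = 0

attribute [instance] IRScheme.fV IRScheme.dV IRScheme.fV' IRScheme.dV'

/-- A repudiative (RIR_max) scheme: every possible answer of every database appears in some
decoding set of every message. -/
def IRScheme.IsRIR {K N : ℕ} {Mn : Fin N → ℕ} {Lw Lx : ℝ} (C : IRScheme K N Mn Lw Lx) : Prop :=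
  ∀ (n : Fin N) (m : Fin (Mn n)) (k : Fin K), ∃ q ∈ C.Q k, q n = m

/-- A perfectly private (PIR_max) scheme: for each message there is a distribution on its
decoding sets such that the marginal distribution of the query to each database does not
depend on the message. -/
def IRScheme.IsPIR {K N : ℕ} {Mn : Fin N → ℕ} {Lw Lx : ℝ} (C : IRScheme K N Mn Lw Lx) : Prop :=
  ∃ μ : Fin K → ((n : Fin N) → Fin (Mn n)) → ℝ,
    (∀ k q, 0 ≤ μ k q) ∧ (∀ k, ∑ q ∈ C.Q k, μ k q = 1) ∧
    (∀ (k k' : Fin K) (n : Fin N) (m : Fin (Mn n)),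
      ∑ q ∈ (C.Q k).filter (fun q => q n = m), μ k q =
        ∑ q ∈ (C.Q k').filter (fun q => q n = m), μ k' q)

/-- `C_K(N) = (1 + 1/N + ⋯ + 1/N^{K-1})⁻¹`, the capacity of PIR. -/
def CK (N K : ℕ) : ℝ := (∑ j ∈ Finset.range K, (1 / (N : ℝ)) ^ j)⁻¹

namespace FinProbSpace

variable (P : FinProbSpace)

theorem prob_nonneg {α : Type} [DecidableEq α] (X : P.Ω → α) (a : α) : 0 ≤ P.prob X a :=
  Finset.sum_nonneg fun ω _ => by split_ifs <;> simp [P.nonneg ω]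

theorem sum_mul_comp {α : Type} [Fintype α] [DecidableEq α] (X : P.Ω → α) (F : α → ℝ) :
    ∑ ω, P.p ω * F (X ω) = ∑ a, P.prob X a * F a := by
  simp only [prob, Finset.sum_mul]
  rw [Finset.sum_comm]
  refine Finset.sum_congr rfl fun ω _ => ?_
  simp

theorem sum_prob {α : Type} [Fintype α] [DecidableEq α] (X : P.Ω → α) :
    ∑ a, P.prob X a = 1 := by
  simpa [P.sum_one] using (P.sum_mul_comp X fun _ => 1).symm

theorem le_prob {α : Type} [DecidableEq α] (X : P.Ω → α) (ω : P.Ω) :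
    P.p ω ≤ P.prob X (X ω) := by
  have h := Finset.single_le_sum (f := fun ω' => if X ω' = X ω then P.p ω' else 0)
    (fun ω' _ => by split_ifs <;> simp [P.nonneg ω']) (Finset.mem_univ ω)
  simpa only [prob, if_true] using h

theorem H_eq_sum {α : Type} [Fintype α] [DecidableEq α] (X : P.Ω → α) :
    P.H X = ∑ ω, P.p ω * -Real.logb 2 (P.prob X (X ω)) := by
  rw [P.sum_mul_comp X fun a => -Real.logb 2 (P.prob X a)]
  simp [H]

theorem prob_le_prob {α β : Type} [DecidableEq α] [DecidableEq β]
    {X : P.Ω → α} {Y : P.Ω → β} (ω : P.Ω) (h : ∀ ω', X ω' = X ω → Y ω' = Y ω) :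
    P.prob X (X ω) ≤ P.prob Y (Y ω) := by
  refine Finset.sum_le_sum fun ω' _ => ?_
  by_cases hX : X ω' = X ω
  · simp [hX, h ω' hX]
  · simp only [hX, if_false]
    split_ifs <;> simp [P.nonneg ω']

/-- Entropy is monotone under refinement of the partition induced by a random variable. -/
theorem H_mono {α β : Type} [Fintype α] [DecidableEq α] [Fintype β] [DecidableEq β]
    {X : P.Ω → α} {Y : P.Ω → β} (h : ∀ ω ω', X ω = X ω' → Y ω = Y ω') : P.H Y ≤ P.H X := by
  rw [H_eq_sum, H_eq_sum]
  refine Finset.sum_le_sum fun ω _ => ?_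
  rcases (P.nonneg ω).eq_or_lt with h0 | h0
  · simp [← h0]
  · refine mul_le_mul_of_nonneg_left (neg_le_neg ?_) h0.le
    exact Real.logb_le_logb_of_le one_lt_two (h0.trans_le (P.le_prob X ω))
      (P.prob_le_prob ω fun ω' => h ω' ω)

theorem H_congr {α β : Type} [Fintype α] [DecidableEq α] [Fintype β] [DecidableEq β]
    {X : P.Ω → α} {Y : P.Ω → β} (h : ∀ ω ω', X ω = X ω' ↔ Y ω = Y ω') : P.H X = P.H Y :=
  le_antisymm (P.H_mono fun ω ω' => (h ω ω').2) (P.H_mono fun ω ω' => (h ω ω').1)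

theorem H_const {α : Type} [Fintype α] [DecidableEq α] {X : P.Ω → α}
    (h : ∀ ω ω', X ω = X ω') : P.H X = 0 := by
  rw [H_eq_sum]
  refine Finset.sum_eq_zero fun ω _ => ?_
  have : P.prob X (X ω) = 1 := by simp [prob, h _ ω, P.sum_one]
  simp [this]

theorem condH_eq_zero {α β : Type} [Fintype α] [DecidableEq α] [Fintype β] [DecidableEq β]
    {X : P.Ω → α} {Y : P.Ω → β} (h : ∀ ω ω', Y ω = Y ω' → X ω = X ω') : P.condH X Y = 0 := by
  rw [condH, sub_eq_zero]
  refine P.H_congr fun ω ω' => ?_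
  simpa using h ω ω'

theorem sum_prob_pair {α β : Type} [Fintype α] [DecidableEq α] [DecidableEq β]
    (X : P.Ω → α) (Y : P.Ω → β) (b : β) :
    ∑ a, P.prob (fun ω => (X ω, Y ω)) (a, b) = P.prob Y b := by
  simp only [prob, Prod.mk.injEq]
  rw [Finset.sum_comm]
  refine Finset.sum_congr rfl fun ω _ => ?_
  by_cases h : Y ω = b <;> simp [h]

theorem H_submodular_triple {α β γ : Type} [Fintype α] [DecidableEq α] [Fintype β]
    [DecidableEq β] [Fintype γ] [DecidableEq γ] (X : P.Ω → α) (Y : P.Ω → β) (Z : P.Ω → γ) :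
    P.H (fun ω => (X ω, Y ω, Z ω)) + P.H Z ≤
      P.H (fun ω => (X ω, Z ω)) + P.H (fun ω => (Y ω, Z ω)) := by
  set XZ := fun ω => (X ω, Z ω) with hXZ
  set YZ := fun ω => (Y ω, Z ω) with hYZ
  set T := fun ω => (X ω, Y ω, Z ω) with hT
  let F : α × β × γ → ℝ := fun a =>
    P.prob XZ (a.1, a.2.2) * P.prob YZ a.2 / (P.prob T a * P.prob Z a.2.2)
  have hF : ∑ ω, P.p ω * F (T ω) ≤ 1 := by
    rw [P.sum_mul_comp T F]
    calc ∑ a, P.prob T a * F a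
        ≤ ∑ a : α × β × γ,
            P.prob XZ (a.1, a.2.2) * P.prob YZ a.2 / P.prob Z a.2.2 := by
          refine Finset.sum_le_sum fun a _ => ?_
          rcases (P.prob_nonneg T a).eq_or_lt with h0 | h0
          · rw [← h0, zero_mul]
            have := P.prob_nonneg XZ (a.1, a.2.2)
            have := P.prob_nonneg YZ a.2
            have := P.prob_nonneg Z a.2.2
            positivity
          · refine le_of_eq ?_
            simp only [F]
            rw [← mul_div_assoc, mul_div_mul_left _ _ h0.ne']
      _ = ∑ c, P.prob Z c * P.prob Z c / P.prob Z c := by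
          simp only [Fintype.sum_prod_type]
          rw [Finset.sum_congr rfl fun a _ => Finset.sum_comm, Finset.sum_comm]
          refine Finset.sum_congr rfl fun c _ => ?_
          simp only [← Finset.sum_div, ← Finset.mul_sum, ← Finset.sum_mul]
          rw [hYZ, hXZ, P.sum_prob_pair, P.sum_prob_pair]
      _ = 1 := by simp only [mul_self_div_self, P.sum_prob]
  have hlog : ∀ ω, P.p ω * (Real.log (P.prob XZ (XZ ω)) + Real.log (P.prob YZ (YZ ω))
      - Real.log (P.prob T (T ω)) - Real.log (P.prob Z (Z ω))) ≤ P.p ω * F (T ω) - P.p ω := by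
    intro ω
    rcases (P.nonneg ω).eq_or_lt with h0 | h0
    · simp [← h0]
    · have h1 := h0.trans_le (P.le_prob XZ ω)
      have h2 := h0.trans_le (P.le_prob YZ ω)
      have h3 := h0.trans_le (P.le_prob T ω)
      have h4 := h0.trans_le (P.le_prob Z ω)
      have hFω : F (T ω) = P.prob XZ (XZ ω) * P.prob YZ (YZ ω) /
          (P.prob T (T ω) * P.prob Z (Z ω)) := rfl
      have := Real.log_le_sub_one_of_pos (x := F (T ω)) (by rw [hFω]; positivity)
      rw [hFω, Real.log_div (by positivity) (by positivity), Real.log_mul h1.ne' h2.ne',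
        Real.log_mul h3.ne' h4.ne', ← hFω] at this
      nlinarith
  have hsum := Finset.sum_le_sum fun ω (_ : ω ∈ Finset.univ) => hlog ω
  rw [Finset.sum_sub_distrib, P.sum_one] at hsum
  have key : P.H T + P.H Z - P.H XZ - P.H YZ =
      (∑ ω, P.p ω * (Real.log (P.prob XZ (XZ ω)) + Real.log (P.prob YZ (YZ ω))
        - Real.log (P.prob T (T ω)) - Real.log (P.prob Z (Z ω)))) / Real.log 2 := by
    simp only [H_eq_sum, ← Finset.sum_add_distrib, ← Finset.sum_sub_distrib, Finset.sum_div,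
      Real.logb]
    exact Finset.sum_congr rfl fun ω _ => by ring
  have : P.H T + P.H Z - P.H XZ - P.H YZ ≤ 0 := by
    rw [key]
    exact div_nonpos_of_nonpos_of_nonneg (by linarith) (Real.log_nonneg one_le_two)
  linarith

/-- Submodularity of entropy, in terms of the partitions induced by the random variables. -/
theorem H_submodular {α β γ δ : Type} [Fintype α] [DecidableEq α] [Fintype β] [DecidableEq β]
    [Fintype γ] [DecidableEq γ] [Fintype δ] [DecidableEq δ]
    {A : P.Ω → α} {B : P.Ω → β} {U : P.Ω → γ} {I : P.Ω → δ}
    (hU : ∀ ω ω', A ω = A ω' → B ω = B ω' → U ω = U ω')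
    (hA : ∀ ω ω', A ω = A ω' → I ω = I ω') (hB : ∀ ω ω', B ω = B ω' → I ω = I ω') :
    P.H U + P.H I ≤ P.H A + P.H B := by
  have h1 : P.H U ≤ P.H (fun ω => (A ω, B ω, I ω)) := P.H_mono fun ω ω' h => by
    simp only [Prod.mk.injEq] at h
    exact hU ω ω' h.1 h.2.1
  have h2 : P.H (fun ω => (A ω, I ω)) = P.H A := P.H_congr fun ω ω' => by
    simpa using hA ω ω'
  have h3 : P.H (fun ω => (B ω, I ω)) = P.H B := P.H_congr fun ω ω' => by
    simpa using hB ω ω'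
  linarith [P.H_submodular_triple A B I]

theorem H_tuple_of_iIndep {ι V : Type} [Fintype ι] [DecidableEq ι] [Fintype V] [DecidableEq V]
    {X : ι → P.Ω → V} (h : P.iIndep X) : P.H (P.tuple X) = ∑ i, P.H (X i) := by
  simp only [H_eq_sum]
  rw [Finset.sum_comm]
  refine Finset.sum_congr rfl fun ω _ => ?_
  rcases (P.nonneg ω).eq_or_lt with h0 | h0
  · simp [← h0]
  · rw [h, ← Finset.mul_sum, Finset.sum_neg_distrib, Real.logb_prod]
    · rfl
    · exact fun i _ => (h0.trans_le (P.le_prob (X i) ω)).ne'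

end FinProbSpace

namespace LDC

variable {K N M : ℕ} {Lw Lx : ℝ} (C : LDC K N M Lw Lx)

/-- The joint entropy of the source symbols in `Z` and the coded symbols in `S`. -/
def jointH (Z : Finset (Fin K)) (S : Finset (Fin M)) : ℝ :=
  C.P.H fun ω => ((fun i : {x // x ∈ Z} => C.W i.1 ω), (fun i : {x // x ∈ S} => C.X i.1 ω))

theorem jointVar_eq_iff {Z : Finset (Fin K)} {S : Finset (Fin M)} {ω ω' : C.P.Ω} :
    (((fun i : {x // x ∈ Z} => C.W i.1 ω), (fun i : {x // x ∈ S} => C.X i.1 ω)) :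
        ({x // x ∈ Z} → C.V) × ({x // x ∈ S} → C.V')) =
      ((fun i => C.W i.1 ω'), (fun i => C.X i.1 ω')) ↔
    (∀ k ∈ Z, C.W k ω = C.W k ω') ∧ ∀ m ∈ S, C.X m ω = C.X m ω' := by
  simp [funext_iff]

theorem jointH_mono {Z Z' : Finset (Fin K)} {S S' : Finset (Fin M)} (hZ : Z ⊆ Z')
    (hS : S ⊆ S') : C.jointH Z S ≤ C.jointH Z' S' :=
  C.P.H_mono fun ω ω' h => by
    rw [jointVar_eq_iff] at h ⊢
    exact ⟨fun k hk => h.1 k (hZ hk), fun m hm => h.2 m (hS hm)⟩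

theorem jointH_submodular (Z Z' : Finset (Fin K)) (S S' : Finset (Fin M)) :
    C.jointH (Z ∪ Z') (S ∪ S') + C.jointH (Z ∩ Z') (S ∩ S') ≤
      C.jointH Z S + C.jointH Z' S' := by
  refine C.P.H_submodular (fun ω ω' h h' => ?_) (fun ω ω' h => ?_) (fun ω ω' h => ?_)
  · rw [jointVar_eq_iff] at h h' ⊢
    simp only [Finset.mem_union]
    exact ⟨fun k hk => hk.elim (h.1 k) (h'.1 k), fun m hm => hm.elim (h.2 m) (h'.2 m)⟩
  all_goals
    rw [jointVar_eq_iff] at h ⊢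
    simp only [Finset.mem_inter]
  · exact ⟨fun k hk => h.1 k hk.1, fun m hm => h.2 m hm.1⟩
  · exact ⟨fun k hk => h.1 k hk.2, fun m hm => h.2 m hm.2⟩

theorem jointH_empty : C.jointH ∅ ∅ = 0 :=
  C.P.H_const fun ω ω' => by simp [funext_iff]

theorem jointH_singleton_left (k : Fin K) : C.jointH {k} ∅ = Lw := by
  refine Eq.trans ?_ (C.HW k)
  exact C.P.H_congr fun ω ω' => by simp [funext_iff]

theorem jointH_singleton_right (m : Fin M) : C.jointH ∅ {m} = Lx := by
  refine Eq.trans ?_ (C.HX m)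
  exact C.P.H_congr fun ω ω' => by simp [funext_iff]

theorem jointH_univ : C.jointH Finset.univ ∅ = K * Lw := by
  have h := C.P.H_tuple_of_iIndep C.indep
  simp only [C.HW, Finset.sum_const, Finset.card_univ, Fintype.card_fin, nsmul_eq_mul] at h
  rw [← h]
  exact C.P.H_congr fun ω ω' => by
    simp [FinProbSpace.tuple, funext_iff]

theorem jointH_source_le (Z : Finset (Fin K)) : C.jointH Z ∅ ≤ Z.card * Lw := by
  induction Z using Finset.induction_on with
  | empty => simp [jointH_empty]
  | insert k Z hk ih =>
    have h := C.jointH_submodular {k} Z ∅ ∅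
    rw [Finset.singleton_inter_of_notMem hk, Finset.inter_self, Finset.union_self,
      jointH_empty, jointH_singleton_left, ← Finset.insert_eq] at h
    rw [Finset.card_insert_of_notMem hk]
    push_cast
    linarith

theorem jointH_source (Z : Finset (Fin K)) : C.jointH Z ∅ = Z.card * Lw := by
  refine le_antisymm (C.jointH_source_le Z) ?_
  have h := C.jointH_submodular Z Zᶜ ∅ ∅
  rw [Finset.union_compl, Finset.inter_compl, Finset.inter_self, Finset.union_self,
    jointH_empty, jointH_univ] at h
  have h' := C.jointH_source_le Zᶜ
  have hc : (Z.card : ℝ) + Zᶜ.card = K := by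
    exact_mod_cast (Finset.card_add_card_compl Z).trans (Fintype.card_fin K)
  rw [← hc] at h
  linarith

theorem jointH_sub_le_sum (Z : Finset (Fin K)) (S : Finset (Fin M)) :
    C.jointH Z S - C.jointH Z ∅ ≤ ∑ m ∈ S, (C.jointH Z {m} - C.jointH Z ∅) := by
  induction S using Finset.induction_on with
  | empty => simp
  | insert m S hm ih =>
    have h := C.jointH_submodular Z Z {m} S
    rw [Finset.singleton_inter_of_notMem hm, Finset.inter_self, Finset.union_self,
      ← Finset.insert_eq] at h
    rw [Finset.sum_insert hm]
    linarith

theorem jointH_insert_le {k : Fin K} {S : Finset (Fin M)} (hS : S ∈ C.decSets k)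
    (Z : Finset (Fin K)) : C.jointH (insert k Z) S ≤ C.jointH Z S := by
  have hdec : C.jointH {k} S = C.jointH ∅ S := by
    have h := C.decodes k S hS
    rw [FinProbSpace.condH, sub_eq_zero] at h
    calc C.jointH {k} S = _ := C.P.H_congr fun ω ω' => by
          simp [FinProbSpace.tuple, funext_iff]
      _ = _ := h
      _ = C.jointH ∅ S := C.P.H_congr fun ω ω' => by
          simp [FinProbSpace.tuple, funext_iff]
  by_cases hk : k ∈ Z
  · rw [Finset.insert_eq_of_mem hk]
  · have h := C.jointH_submodular {k} Z S S
    rw [Finset.singleton_inter_of_notMem hk, Finset.inter_self, Finset.union_self,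
      ← Finset.insert_eq] at h
    linarith

/-- Some coded symbol has large conditional entropy given the source symbols in `Z`. -/
theorem exists_le_jointH_sub (hC : C.IsUniversal) (hK : 1 ≤ K) (hN : 1 ≤ N) (n : ℕ) :
    ∀ Z : Finset (Fin K), Z.card + n = K → ∃ m,
      Lw / N * ∑ j ∈ Finset.range n, (1 / (N : ℝ)) ^ j ≤ C.jointH Z {m} - C.jointH Z ∅ := by
  have hN0 : (0 : ℝ) < N := by exact_mod_cast hN
  induction n with
  | zero =>
    intro Z _
    obtain ⟨s, hs⟩ := C.decSets_nonempty ⟨0, hK⟩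
    have hpos : 0 < s.card := by rw [C.decSets_card _ s hs]; exact hN
    obtain ⟨m, -⟩ := Finset.card_pos.1 hpos
    refine ⟨m, ?_⟩
    simpa using C.jointH_mono (Finset.Subset.refl Z) (Finset.empty_subset {m})
  | succ n ih =>
    intro Z hZ
    obtain ⟨k, hk⟩ : ∃ k, k ∉ Z := by
      by_contra! hall
      rw [Finset.eq_univ_iff_forall.2 hall, Finset.card_univ, Fintype.card_fin] at hZ
      omega
    obtain ⟨m, hm⟩ := ih (insert k Z) (by rw [Finset.card_insert_of_notMem hk]; omega)
    obtain ⟨S, hS, hmS⟩ := hC m k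
    have hcard := C.decSets_card k S hS
    have hsum := C.jointH_sub_le_sum Z S
    have hins := C.jointH_insert_le hS Z
    have hmono := C.jointH_mono (Finset.Subset.refl (insert k Z))
      (Finset.singleton_subset_iff.2 hmS)
    have hsrc : C.jointH (insert k Z) ∅ = Lw + C.jointH Z ∅ := by
      rw [jointH_source, jointH_source, Finset.card_insert_of_notMem hk]
      push_cast
      ring
    have hSne : S.Nonempty := ⟨m, hmS⟩
    have hgeom : ∑ j ∈ Finset.range (n + 1), (1 / (N : ℝ)) ^ j =
        1 + 1 / N * ∑ j ∈ Finset.range n, (1 / (N : ℝ)) ^ j := by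
      rw [Finset.sum_range_succ', Finset.mul_sum, pow_zero, add_comm]
      exact congrArg (1 + ·) (Finset.sum_congr rfl fun j _ => pow_succ' _ _)
    obtain ⟨i, -, hi⟩ := Finset.exists_le_of_sum_le hSne
      (f := fun _ => Lw / N * ∑ j ∈ Finset.range (n + 1), (1 / (N : ℝ)) ^ j)
      (g := fun i => C.jointH Z {i} - C.jointH Z ∅) (by
        rw [Finset.sum_const, hcard, nsmul_eq_mul, hgeom]
        have : (N : ℝ) * (Lw / N * (1 + 1 / N * ∑ j ∈ Finset.range n, (1 / (N : ℝ)) ^ j)) =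
            Lw + Lw / N * ∑ j ∈ Finset.range n, (1 / (N : ℝ)) ^ j := by
          field_simp
        rw [this]
        linarith)
    exact ⟨i, hi⟩

theorem rate_le_Cstar (hC : C.IsUniversal) (hK : 1 ≤ K) (hN : 1 ≤ N) (hLx : 0 < Lx) :
    Lw / Lx ≤ Cstar N K := by
  obtain ⟨m, hm⟩ := C.exists_le_jointH_sub hC hK hN K ∅ (by simp)
  rw [jointH_singleton_right, jointH_empty, sub_zero] at hm
  have hN0 : (0 : ℝ) < N := by exact_mod_cast hN
  have hS : 0 < ∑ j ∈ Finset.range K, (1 / (N : ℝ)) ^ j :=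
    Finset.sum_pos (fun j _ => by positivity) (Finset.nonempty_range_iff.2 (by omega))
  rw [Cstar, div_le_div_iff₀ hLx hS]
  rw [div_mul_eq_mul_div, div_le_iff₀ hN0] at hm
  linarith

end LDC

namespace FinProbSpace

/-- The uniform distribution on a nonempty finite type. -/
def uniform (Ω : Type) [Fintype Ω] [Nonempty Ω] : FinProbSpace where
  Ω := Ω
  p _ := (Fintype.card Ω : ℝ)⁻¹
  nonneg _ := by positivity
  sum_one := by simp

/-- A surjective homomorphism pushes the uniform distribution to the uniform distribution. -/
theorem prob_uniform_of_surjective {G A : Type} [AddGroup G] [Fintype G] [AddGroup A]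
    [Fintype A] [DecidableEq A] (f : G →+ A) (hf : Function.Surjective f) (a : A) :
    (uniform G).prob f a = (Fintype.card A : ℝ)⁻¹ := by
  have hconst : ∀ b, (uniform G).prob f b = (uniform G).prob f a := by
    intro b
    obtain ⟨g, hg⟩ := hf (-b + a)
    refine Fintype.sum_equiv (Equiv.addRight g) _ _ fun x => ?_
    have : f (x + g) = a ↔ f x = b := by
      rw [map_add, hg, ← add_assoc, add_eq_right, ← sub_eq_add_neg, sub_eq_zero]
    change (if f x = b then (Fintype.card G : ℝ)⁻¹ else 0) =
      if f (x + g) = a then (Fintype.card G : ℝ)⁻¹ else 0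
    simp only [this]
  have hsum := (uniform G).sum_prob (f : G → A)
  simp only [hconst, Finset.sum_const, Finset.card_univ, nsmul_eq_mul] at hsum
  exact eq_inv_of_mul_eq_one_right hsum

theorem H_uniform_of_surjective {G A : Type} [AddGroup G] [Fintype G] [AddGroup A]
    [Fintype A] [DecidableEq A] (f : G →+ A) (hf : Function.Surjective f) :
    (uniform G).H f = Real.logb 2 (Fintype.card A) := by
  simp only [H, prob_uniform_of_surjective f hf, Finset.sum_const, Finset.card_univ,
    nsmul_eq_mul, Real.logb_inv]
  have : (Fintype.card A : ℝ) ≠ 0 := by exact_mod_cast Fintype.card_ne_zero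
  field_simp

end FinProbSpace

section Construction

variable (K N : ℕ)

/-- Coordinates of the coded symbols and indices of the blocks of a source symbol. -/
abbrev Grid : Type := Fin K → ZMod N

/-- Each source symbol consists of one block of `N - 1` bits for every grid point. -/
abbrev SourceAlphabet : Type := Grid K N → {j : ZMod N // j ≠ 0} → ZMod 2

/-- Each coded symbol has one bit for every nonzero grid point. -/
abbrev CodeAlphabet : Type := {s : Grid K N // s ≠ 0} → ZMod 2

variable {K N}

/-- A block of a source symbol, extended by the value `0` at position `0`. -/
def extendBlock (b : {j : ZMod N // j ≠ 0} → ZMod 2) (j : ZMod N) : ZMod 2 :=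
  if h : j ≠ 0 then b ⟨j, h⟩ else 0

/-- The bit at `s` of the coded symbol at `q`: the sum over `k` of the bits at position `s k`
of the blocks `s - q`. -/
def codeBit (q : Grid K N) (w : Fin K → SourceAlphabet K N) (s : Grid K N) : ZMod 2 :=
  ∑ k, extendBlock (w k (s - q)) (s k)

theorem codeBit_zero (q : Grid K N) (w : Fin K → SourceAlphabet K N) : codeBit q w 0 = 0 := by
  simp [codeBit, extendBlock]

/-- The coded symbol at the grid point `q`. -/
def codeHom (q : Grid K N) : (Fin K → SourceAlphabet K N) →+ CodeAlphabet K N where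
  toFun w s := codeBit q w s.1
  map_zero' := by
    funext s
    simp [codeBit, extendBlock]
  map_add' w w' := by
    funext s
    simp only [codeBit, Pi.add_apply, ← Finset.sum_add_distrib]
    refine Finset.sum_congr rfl fun k _ => ?_
    simp only [extendBlock]
    split_ifs <;> simp

theorem codeHom_apply (q : Grid K N) (w : Fin K → SourceAlphabet K N)
    (s : {s : Grid K N // s ≠ 0}) : codeHom q w s = codeBit q w s.1 := rfl

theorem codeHom_surjective (q : Grid K N) : Function.Surjective (codeHom q) := by
  intro y
  have hex : ∀ s : {s : Grid K N // s ≠ 0}, ∃ k, s.1 k ≠ 0 := fun s =>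
    Function.ne_iff.1 s.2
  choose c hc using hex
  refine ⟨fun k t _ => if h : t + q ≠ 0 then
    if k = c ⟨t + q, h⟩ then y ⟨t + q, h⟩ else 0 else 0, ?_⟩
  funext s
  rw [codeHom_apply, codeBit, Finset.sum_eq_single (c s)]
  · simp [extendBlock, hc s, s.2]
  · intro k _ hk
    simp [extendBlock, hk]
  · simp

/-- The coded symbols on the axis-parallel line in direction `k` through `q` determine the
source symbol `k`. -/
theorem source_eq_of_line (k : Fin K) (q : Grid K N) {w w' : Fin K → SourceAlphabet K N}
    (h : ∀ j, codeHom (Function.update q k j) w = codeHom (Function.update q k j) w') :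
    w k = w' k := by
  have hbit : ∀ (j : ZMod N) (s : Grid K N),
      codeBit (Function.update q k j) w s = codeBit (Function.update q k j) w' s := by
    intro j s
    by_cases hs : s = 0
    · rw [hs, codeBit_zero, codeBit_zero]
    · exact congrFun (h j) ⟨s, hs⟩
  funext t j
  have hdiff : ∀ v : Fin K → SourceAlphabet K N, v k t j =
      codeBit (Function.update q k (j.1 - t k)) v (Function.update (q + t) k j.1) -
      codeBit (Function.update q k (-t k)) v (Function.update (q + t) k 0) := by
    intro v
    have ht : ∀ a : ZMod N,
        Function.update (q + t) k a - Function.update q k (a - t k) = t := by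
      intro a
      funext i
      by_cases hi : i = k
      · subst hi; simp
      · simp [hi]
    have h0 := ht 0
    rw [zero_sub] at h0
    rw [codeBit, codeBit, ht, h0, ← Finset.sum_sub_distrib, Finset.sum_eq_single k]
    · simp [extendBlock, j.2]
    · intro i _ hi
      simp [hi]
    · simp
  rw [hdiff w, hdiff w', hbit, hbit]

variable (K N)

/-- The code whose coded symbols are indexed by `Grid K N` and whose decoding sets for the
source symbol `k` are the lines in direction `k`. -/
def gridCode [NeZero N] : LDC K N (Fintype.card (Grid K N))
    (Real.logb 2 (Fintype.card (SourceAlphabet K N)))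
    (Real.logb 2 (Fintype.card (CodeAlphabet K N))) where
  P := FinProbSpace.uniform (Fin K → SourceAlphabet K N)
  V := SourceAlphabet K N
  V' := CodeAlphabet K N
  W k w := w k
  X m := codeHom ((Fintype.equivFin (Grid K N)).symm m)
  indep a := by
    have hprod : ∀ k, (FinProbSpace.uniform (Fin K → SourceAlphabet K N)).prob
        (fun w => w k) (a k) = (Fintype.card (SourceAlphabet K N) : ℝ)⁻¹ := fun k =>
      FinProbSpace.prob_uniform_of_surjective
        (Pi.evalAddMonoidHom (fun _ : Fin K => SourceAlphabet K N) k)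
        (Function.surjective_eval k) (a k)
    have hjoint := FinProbSpace.prob_uniform_of_surjective
      (AddMonoidHom.id (Fin K → SourceAlphabet K N)) Function.surjective_id a
    rw [Finset.prod_congr rfl fun k _ => hprod k, Finset.prod_const, Finset.card_univ, inv_pow]
    refine hjoint.trans ?_
    rw [Fintype.card_fun]
    push_cast
    rfl
  HW k := FinProbSpace.H_uniform_of_surjective
    (Pi.evalAddMonoidHom (fun _ : Fin K => SourceAlphabet K N) k) (Function.surjective_eval k)
  coded_fn m := ⟨codeHom ((Fintype.equivFin (Grid K N)).symm m), fun _ => rfl⟩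
  HX m := FinProbSpace.H_uniform_of_surjective _ (codeHom_surjective _)
  decSets k := Finset.univ.image fun q : Grid K N =>
    Finset.univ.image fun j : ZMod N => Fintype.equivFin (Grid K N) (Function.update q k j)
  decSets_nonempty k := Finset.univ_nonempty.image _
  decSets_card k s hs := by
    obtain ⟨q, -, rfl⟩ := Finset.mem_image.1 hs
    rw [Finset.card_image_of_injective, Finset.card_univ, ZMod.card]
    exact (Fintype.equivFin _).injective.comp (Function.update_injective q k)
  decodes k s hs := by
    obtain ⟨q, -, rfl⟩ := Finset.mem_image.1 hs
    refine FinProbSpace.condH_eq_zero _ fun w w' h => source_eq_of_line k q fun j => ?_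
    have hj := congrFun h ⟨Fintype.equivFin (Grid K N) (Function.update q k j),
      Finset.mem_image_of_mem _ (Finset.mem_univ j)⟩
    simpa [FinProbSpace.tuple] using hj

theorem gridCode_isUniversal [NeZero N] : (gridCode K N).IsUniversal := by
  intro m k
  set q := (Fintype.equivFin (Grid K N)).symm m with hq
  refine ⟨_, Finset.mem_image_of_mem _ (Finset.mem_univ q), ?_⟩
  refine Finset.mem_image.2 ⟨q k, Finset.mem_univ _, ?_⟩
  rw [Function.update_eq_self, hq, Equiv.apply_symm_apply]

theorem logb_card_sourceAlphabet [NeZero N] :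
    Real.logb 2 (Fintype.card (SourceAlphabet K N)) = (N - 1) * (N : ℝ) ^ K := by
  have h : Fintype.card (SourceAlphabet K N) = 2 ^ ((N - 1) * N ^ K) := by
    simp [Fintype.card_subtype_compl, ZMod.card, pow_mul]
  rw [h, Nat.cast_pow, Real.logb_pow, Nat.cast_ofNat, Real.logb_self_eq_one one_lt_two]
  push_cast [Nat.cast_pred (NeZero.pos N)]
  ring

theorem logb_card_codeAlphabet [NeZero N] :
    Real.logb 2 (Fintype.card (CodeAlphabet K N)) = (N : ℝ) ^ K - 1 := by
  have h : Fintype.card (CodeAlphabet K N) = 2 ^ (N ^ K - 1) := by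
    simp [Fintype.card_subtype_compl, ZMod.card]
  rw [h, Nat.cast_pow, Real.logb_pow, Nat.cast_ofNat, Real.logb_self_eq_one one_lt_two,
    Nat.cast_pred (pow_pos (NeZero.pos N) K)]
  push_cast
  ring

theorem Cstar_eq (hK : 1 ≤ K) (hN : 2 ≤ N) :
    Cstar N K = (N - 1) * (N : ℝ) ^ K / ((N : ℝ) ^ K - 1) := by
  have hN1 : (1 : ℝ) < N := by exact_mod_cast hN
  have hpow : 1 < (N : ℝ) ^ K := one_lt_pow₀ hN1 (by omega)
  have hN0 : (N : ℝ) ≠ 0 := by positivity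
  have hN1' : (1 : ℝ) - N ≠ 0 := by linarith
  have hinv : 1 / (N : ℝ) ≠ 1 := by
    rw [Ne, div_eq_one_iff_eq hN0]
    exact hN1.ne
  have h1 : (N : ℝ) ^ K - 1 ≠ 0 := by linarith
  have h2 : (1 : ℝ) - (N : ℝ) ^ K ≠ 0 := by linarith
  rw [Cstar, geom_sum_eq hinv, one_div, inv_pow]
  have h3 : ((N : ℝ)⁻¹ ^ K - 1) = (1 - (N : ℝ) ^ K) / (N : ℝ) ^ K := by
    rw [inv_pow]; field_simp
  have h4 : ((N : ℝ)⁻¹ - 1) = (1 - N) / N := by field_simp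
  rw [← inv_pow, h3, h4]
  field_simp
  ring

end Construction

/-- Capacity of universal LDCs, Theorem 1: for `N ≥ 2`, `K ≥ 1`, the
supremum over all code lengths `M` and all ULDCs of the symbol rate `Lw / Lx` equals
`C*(N, K)`, and it is attained. -/
theorem uldc_capacity (K N : ℕ) (hK : 1 ≤ K) (hN : 2 ≤ N) :
    IsGreatest {r : ℝ | ∃ (M : ℕ) (Lw Lx : ℝ), 0 < Lw ∧ 0 < Lx ∧
      ∃ C : LDC K N M Lw Lx, C.IsUniversal ∧ r = Lw / Lx} (Cstar N K) := by
  have : NeZero N := ⟨by omega⟩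
  have hN1 : (1 : ℝ) < N := by exact_mod_cast hN
  have hpow : 1 < (N : ℝ) ^ K := one_lt_pow₀ hN1 (by omega)
  refine ⟨⟨_, _, _, ?_, ?_, gridCode K N, gridCode_isUniversal K N, ?_⟩, ?_⟩
  · rw [logb_card_sourceAlphabet]
    exact mul_pos (by linarith) (by linarith)
  · rw [logb_card_codeAlphabet]
    linarith
  · rw [logb_card_sourceAlphabet, logb_card_codeAlphabet, Cstar_eq K N hK hN]
  · rintro r ⟨M, Lw, Lx, -, hLx, C, hC, rfl⟩
    exact C.rate_le_Cstar hC hK (by omega) hLx
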